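/- arXiv:1710.02802 — 4 statements merged into one kernel-verified Lean document; each statement's English description precedes it below -/
import Mathlib

section
/- Let K be a field of characteristic zero and let Q ∈ K[x,y] be written as Q = Q_r y^r + Q_{r-1}(x) y^{r-1} + ... + Q_1(x) y + Q_0(x) with r ≥ 1 and leading coefficient Q_r a nonzero constant of K. If the partial derivative Q_y divides Q_x in K[x,y], then there exists a(x) ∈ K[x] such that Q is a polynomial in y + a(x); more precisely one can take a(x) = Q_{r-1}(x)/(r Q_r). -/
open Polynomial

/-- Coefficientwise derivative. -/
noncomputable def coeffD (K : Type*) [Field K] : K[X][X] →+ K[X][X] where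
  toFun Q := Q.sum (fun n a => C (derivative a) * X ^ n)
  map_zero' := by simp
  map_add' p q := by
    rw [sum_add_index] <;> intros <;> simp [add_mul]

theorem coeffD_monomial (K : Type*) [Field K] (n : ℕ) (a : K[X]) :
    coeffD K (monomial n a) = monomial n (derivative a) := by
  change (monomial n a).sum (fun n a => C (derivative a) * X ^ n) = _
  rw [sum_monomial_index _ _ (by simp), C_mul_X_pow_eq_monomial]

theorem coeffD_coeff (K : Type*) [Field K] (Q : K[X][X]) (m : ℕ) :
    (coeffD K Q).coeff m = derivative (Q.coeff m) := by
  induction Q using Polynomial.induction_on' with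
  | add p q hp hq => simp [hp, hq]
  | monomial n a =>
    rw [coeffD_monomial]
    simp only [coeff_monomial]
    split_ifs <;> simp

theorem coeffD_mul (K : Type*) [Field K] (P Q : K[X][X]) :
    coeffD K (P * Q) = coeffD K P * Q + P * coeffD K Q := by
  ext1 m
  simp only [coeffD_coeff, coeff_mul, coeff_add, derivative_sum, derivative_mul,
    Finset.sum_add_distrib]

theorem coeffD_comp (K : Type*) [Field K] (Q : K[X][X]) (a : K[X]) :
    coeffD K (Q.comp (X - C a)) =
      (coeffD K Q).comp (X - C a) - (derivative Q).comp (X - C a) * C (derivative a) := by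
  have hC : ∀ b : K[X], coeffD K (C b) = C (derivative b) := fun b => by
    simpa using coeffD_monomial K 0 b
  have hX : coeffD K X = 0 := by
    simpa [monomial_one_one_eq_X] using coeffD_monomial K 1 1
  induction Q using Polynomial.induction_on with
  | C b => simp [hC]
  | add p q hp hq => simp only [add_comp, map_add, hp, hq, derivative_add]; ring
  | monomial n b ih =>
    have e : (C b * X ^ (n + 1) : K[X][X]) = (C b * X ^ n) * X := by ring
    rw [e, mul_comp, coeffD_mul, coeffD_mul, ih, derivative_mul]
    simp only [X_comp, map_sub, hX, hC, derivative_X, add_comp, mul_comp]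
    simp
    ring

theorem stmt_0 (K : Type*) [Field K] [CharZero K]
    (Q : Polynomial (Polynomial K)) (r : ℕ) (qr : K)
    (hr : 1 ≤ r) (hdeg : Q.natDegree = r) (hqr : qr ≠ 0)
    (hlead : Q.leadingCoeff = Polynomial.C qr)
    (hdvd : (Polynomial.derivative Q) ∣
      Q.sum (fun n a => Polynomial.C (Polynomial.derivative a) * Polynomial.X ^ n)) :
    ∃ g : Polynomial K,
      Q = (g.map (Polynomial.C : K →+* Polynomial K)).comp
        (Polynomial.X + Polynomial.C (((r : K) * qr)⁻¹ • Q.coeff (r - 1))) := by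
  obtain ⟨h, hh⟩ := hdvd
  change coeffD K Q = _ at hh
  obtain ⟨s, rfl⟩ : ∃ s, r = s + 1 := ⟨r - 1, by omega⟩
  simp only [Nat.add_sub_cancel]
  set a : K[X] := (((s + 1 : ℕ) : K) * qr)⁻¹ • Q.coeff s with ha
  have hs : (((s + 1 : ℕ) : K) * qr) ≠ 0 :=
    mul_ne_zero (Nat.cast_ne_zero.mpr (Nat.succ_ne_zero s)) hqr
  have hl : Q.coeff (s + 1) = C qr := by rw [← hlead, leadingCoeff, hdeg]
  have hQs : (derivative Q).coeff s = C (((s + 1 : ℕ) : K) * qr) := by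
    rw [coeff_derivative, hl]; simp [mul_comm]
  have hQd : (derivative Q).natDegree = s := by
    apply le_antisymm
    · have := natDegree_derivative_le Q
      omega
    · apply le_natDegree_of_ne_zero
      rw [hQs]; exact C_ne_zero.mpr hs
  have hQz : derivative Q ≠ 0 := by
    intro h0
    rw [h0, coeff_zero] at hQs
    exact hs (C_eq_zero.mp hQs.symm)
  have hDd : (coeffD K Q).natDegree ≤ s := by
    rw [natDegree_le_iff_coeff_eq_zero]
    intro N hN
    rw [coeffD_coeff]
    rcases Nat.lt_or_ge (s + 1) N with h1 | h1
    · rw [coeff_eq_zero_of_natDegree_lt (by omega), derivative_zero]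
    · obtain rfl : N = s + 1 := by omega
      rw [hl, derivative_C]
  have hb : ∃ b, h = C b := by
    by_cases h0 : h = 0
    · exact ⟨0, by simp [h0]⟩
    · rw [hh, natDegree_mul hQz h0, hQd] at hDd
      exact ⟨_, eq_C_of_natDegree_eq_zero (by omega)⟩
  obtain ⟨b, rfl⟩ := hb
  have hba : b = derivative a := by
    have := congrArg (fun p => coeff p s) hh
    simp only [coeffD_coeff, coeff_mul_C, hQs] at this
    rw [ha, derivative_smul, this, ← smul_eq_C_mul, smul_smul, inv_mul_cancel₀ hs, one_smul]
  have hD : coeffD K (Q.comp (X - C a)) = 0 := by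
    rw [coeffD_comp, hh, hba]; simp
  have hlift : Q.comp (X - C a) ∈ lifts (C : K →+* K[X]) := by
    rw [lifts_iff_coeff_lifts]
    intro n
    have := coeffD_coeff K (Q.comp (X - C a)) n
    rw [hD, coeff_zero] at this
    exact ⟨_, (eq_C_of_natDegree_eq_zero
      (derivative_eq_zero.mp this.symm)).symm⟩
  obtain ⟨g, hg⟩ := (mem_lifts _).mp hlift
  refine ⟨g, ?_⟩
  rw [hg, comp_assoc]
  simp
end

section
/- Let K be an algebraically closed field of characteristic zero. Let H = (u(x,y,z), v(x,y,u(x,y,z)), h(x,y)) be a polynomial map from K^3 to K^3 with H(0) = 0, where u ∈ K[x,y,z], v ∈ K[x,y,t] with deg_t v ≥ 2, and h ∈ K[x,y]. If the Jacobian matrix JH is nilpotent, then the three components of H are linearly dependent over K. -/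
namespace Stmt12
open Polynomial in
theorem coeff_comp_top {A : Type*} [CommRing A] [IsDomain A] (p q : A[X]) (m : ℕ)
    (hp : p.natDegree ≤ m) (hq : 0 < q.natDegree) :
    (p.comp q).coeff (m * q.natDegree) = p.coeff m * q.leadingCoeff ^ m := by
  rcases hp.eq_or_lt with h | h
  · subst h
    exact coeff_comp_degree_mul_degree hq.ne'
  · rw [coeff_eq_zero_of_natDegree_lt h, zero_mul]
    apply coeff_eq_zero_of_natDegree_lt
    rw [natDegree_comp]
    exact Nat.mul_lt_mul_of_pos_right h hq

open Polynomial in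
theorem comp_inj {A : Type*} [CommRing A] [IsDomain A] (p q : A[X])
    (hq : 0 < q.natDegree) (h : p.comp q = 0) : p = 0 := by
  rcases comp_eq_zero_iff.1 h with h | ⟨_, h⟩
  · exact h
  · rw [h, natDegree_C] at hq; omega

/-- Final computation in the coefficient ring. -/
theorem endgame {A : Type*} [CommRing A] [IsDomain A]
    (dx dy : Derivation ℤ A A) (comm : ∀ a, dx (dy a) = dy (dx a))
    (c q h M w v0 v1 : A) (hc : c ≠ 0) (hcx : dx c = 0) (hcy : dy c = 0)
    (hM : M ≠ 0) (hMx : dx M = 0) (hMy : dy M = 0) (hy : dy h ≠ 0)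
    (F1t : dy w + dy q * M = 0)
    (F2t : - dx q * dy w + dy q * dx w + c * (dy h * M) = 0)
    (F3t : dx w * dy h = dy w * dx h)
    (F1 : dx q + dy v0 + dy q * v1 = 0)
    (F2 : - dx q * dy v0 + dy q * dx v0 + c * (dx h + dy h * v1) = 0)
    (F3 : dx v0 * dy h = dy v0 * dx h) : False := by
  have hqy : dy q ≠ 0 := by
    intro h0
    have : dy w = 0 := by linear_combination F1t - M * h0
    have : c * (dy h * M) = 0 := by linear_combination F2t + dx q * this - dx w * h0
    simp_all
  set g := w + M * q with hg
  have hgx : dx g = dx w + M * dx q := by simp [hg, hMx]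
  have hgy : dy g = 0 := by simp [hg, hMy]; linear_combination F1t
  have hgxy : dy (dx g) = 0 := by rw [← comm, hgy, map_zero]
  set e := dx g with he
  have k1 : dy q * e = - (c * M * dy h) := by
    rw [hgx]; linear_combination F2t + dx q * F1t
  set G := c * M * h + e * q with hG
  have hGy : dy G = 0 := by
    simp [hG, hMy, hcy, hgxy]; linear_combination k1
  have hGx : dx G = c * M * dx h + e * dx q + q * dx e := by
    simp [hG, hMx, hcx]; ring
  have k2 : e ^ 2 = M * (dx G - q * dx e) := by
    apply mul_left_cancel₀ hqy
    rw [hGx]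
    linear_combination (e - M * dx q) * k1 - (c * M) * F3t - c*M*dx h * F1t + (-(c * M * dy h)) * hgx
  have hex : dx e = 0 := by
    have := congrArg dy k2
    simp [hMy, hgxy, ← comm, hGy, pow_two] at this
    tauto
  rw [hex, mul_zero, sub_zero] at k2
  rw [hex, mul_zero, add_zero] at hGx
  have he0 : e ≠ 0 := by
    intro h0
    rw [h0] at k1
    have : c * M * dy h = 0 := by linear_combination k1
    exact mul_ne_zero (mul_ne_zero hc hM) hy this
  have k3 : e * dx G = 0 := by
    have a1 : - M * dx q * dy v0 + M * dy q * dx v0 + dx G + e * dy v0 = 0 := by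
      rw [hGx]; linear_combination M * F2 + e * F1 - v1 * k1
    have a2 : - e * dy q * dx v0 = (dx G - e * dx q) * dy v0 := by
      rw [hGx]; linear_combination (c * M) * F3 - dx v0 * k1
    linear_combination e * a1 + M * a2 - dy v0 * k2
  have : dx G = 0 := by simpa [he0] using k3
  rw [this] at k2
  simp_all

open Polynomial in
theorem caseI {A : Type*} [CommRing A] [IsDomain A] [CharZero A]
    (dx dy : Derivation ℤ A A) (comm : ∀ a, dx (dy a) = dy (dx a))
    (P1 : ∀ p q, p * q ≠ 0 → dy (p * q) = 0 → dy p = 0)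
    (P2 : ∀ p, p ∣ dx p → dx p = 0)
    (u ux uy v vx vy : A[X]) (h : A)
    (hux : ∀ i, ux.coeff i = dx (u.coeff i)) (huy : ∀ i, uy.coeff i = dy (u.coeff i))
    (hvx : ∀ i, vx.coeff i = dx (v.coeff i)) (hvy : ∀ i, vy.coeff i = dy (v.coeff i))
    (hm : 2 ≤ v.natDegree) (hu : derivative u ≠ 0)
    (E1 : ux + vy.comp u + (derivative v).comp u * uy = 0)
    (E2 : ux * vy.comp u - uy * vx.comp u
      - derivative u * (C (dx h) + (derivative v).comp u * C (dy h)) = 0)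
    (E3 : derivative u * (vx.comp u * C (dy h) - vy.comp u * C (dx h)) = 0) :
    dx h = 0 ∧ dy h = 0 := by
  by_contra hne
  have natle : ∀ (d : Derivation ℤ A A) (p q : A[X]), (∀ i, q.coeff i = d (p.coeff i)) →
      q.natDegree ≤ p.natDegree := by
    intro d p q hpq
    rw [natDegree_le_iff_coeff_eq_zero]
    intro N hN
    rw [hpq, coeff_eq_zero_of_natDegree_lt hN, map_zero]
  obtain ⟨m, hmdef⟩ : ∃ m, v.natDegree = m + 2 := ⟨v.natDegree - 2, by omega⟩
  have hn : 0 < u.natDegree := by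
    by_contra h0
    apply hu
    rw [eq_C_of_natDegree_eq_zero (by omega : u.natDegree = 0), derivative_C]
  obtain ⟨n, hndef⟩ : ∃ n, u.natDegree = n + 1 := ⟨u.natDegree - 1, by omega⟩
  have hvm : v.coeff (m + 2) ≠ 0 := by
    rw [← hmdef]; exact leadingCoeff_ne_zero.2 (by rintro rfl; simp at hmdef)
  have hc0 : u.leadingCoeff ≠ 0 := leadingCoeff_ne_zero.2 (by rintro rfl; simp at hndef)
  have hdv : (derivative v).natDegree = m + 1 := by
    rw [natDegree_derivative, hmdef]; rfl
  have hdu : (derivative u).natDegree = n := by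
    rw [natDegree_derivative, hndef]; rfl
  have hdv0 : derivative v ≠ 0 := by intro h0; simp [h0] at hdv
  have F3 : vx * C (dy h) = vy * C (dx h) := by
    rw [← sub_eq_zero]
    apply comp_inj _ u hn
    simpa [hu] using E3
  have hnux := natle dx u ux hux
  have hnuy := natle dy u uy huy
  have hnvy := natle dy v vy hvy
  rw [hmdef] at hnvy
  have hdvt : (derivative v).coeff (m + 1) = ((m : A) + 2) * v.coeff (m + 2) := by
    rw [coeff_derivative]; push_cast; ring
  have hm2 : ((m : A) + 2) ≠ 0 := by exact_mod_cast (by omega : m + 2 ≠ 0)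
  -- top coefficient of `E1`
  have top1 : dy (v.coeff (m + 2)) * u.leadingCoeff ^ (m + 2)
      + ((m : A) + 2) * v.coeff (m + 2) * u.leadingCoeff ^ (m + 1) * dy u.leadingCoeff = 0 := by
    have := congrArg (fun p => coeff p ((m + 2) * u.natDegree)) E1
    simp only [coeff_add, coeff_zero] at this
    rw [coeff_comp_top vy u _ hnvy hn,
      coeff_eq_zero_of_natDegree_lt (p := ux) (by nlinarith),
      (by ring : (m + 2) * u.natDegree = (m + 1) * u.natDegree + u.natDegree),
      coeff_mul_add_eq_of_natDegree_le (by rw [natDegree_comp, hdv]) hnuy,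
      coeff_comp_top _ u _ hdv.le hn, hdvt, hvy, huy] at this
    simpa using this
  have hvmy : dy (v.coeff (m + 2)) = 0 := by
    apply P1 _ (u.leadingCoeff ^ (m + 2)) (mul_ne_zero hvm (pow_ne_zero _ hc0))
    rw [Derivation.leibniz, Derivation.leibniz_pow]
    simp only [smul_eq_mul, nsmul_eq_mul]
    push_cast
    linear_combination top1
  have hcy : dy u.leadingCoeff = 0 := by
    rw [hvmy] at top1
    simpa [hm2, hvm, hc0] using top1
  have hnvy' : vy.natDegree ≤ m + 1 := by
    rw [natDegree_le_iff_coeff_eq_zero]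
    intro N hN
    rcases (by omega : N = m + 2 ∨ m + 2 < N) with rfl | h1
    · rw [hvy, hvmy]
    · exact coeff_eq_zero_of_natDegree_lt (by omega)
  -- `uy` is constant
  obtain ⟨s, hs⟩ : ∃ s, uy = C s := by
    by_cases h0 : uy = 0
    · exact ⟨0, by simp [h0]⟩
    have e : (derivative v).comp u * uy = - (ux + vy.comp u) := by linear_combination E1
    have e2 := congrArg natDegree e
    have h3 : (derivative v).comp u ≠ 0 := fun h => hdv0 (comp_inj _ u hn h)
    rw [natDegree_mul h3 h0, natDegree_comp, hdv, natDegree_neg] at e2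
    have h4 : (ux + vy.comp u).natDegree ≤ (m + 1) * u.natDegree := by
      apply natDegree_add_le_of_degree_le
      · nlinarith
      · rw [natDegree_comp]; exact Nat.mul_le_mul_right _ hnvy'
    exact ⟨_, eq_C_of_natDegree_eq_zero (by omega)⟩
  -- `u` has degree one
  set p : A[X] := C (dx h) + derivative v * C (dy h) with hp
  have hp0 : p ≠ 0 := by
    intro h0
    by_cases hy : dy h = 0
    · apply hne
      rw [hp, hy] at h0
      simpa [hy] using h0
    · have := congrArg (fun p => coeff p (m + 1)) h0
      simp [hp, coeff_C, hdvt, hy, hvm, hm2] at this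
  have hux2 : ux = -((vy + derivative v * C s).comp u) := by
    rw [hs] at E1
    simp only [add_comp, mul_comp, C_comp]
    linear_combination E1
  have key : derivative u * p.comp u
      = (-(vy * (vy + derivative v * C s) + C s * vx)).comp u := by
    rw [hux2, hs] at E2
    simp only [hp, neg_comp, add_comp, mul_comp, C_comp] at E2 ⊢
    linear_combination -E2
  have hn0 : n = 0 := by
    have e := congrArg natDegree key
    have h3 : p.comp u ≠ 0 := fun h => hp0 (comp_inj _ u hn h)
    rw [natDegree_mul hu h3, natDegree_comp, natDegree_comp, hdu, hndef] at e
    have : n + 1 ∣ n := (Nat.dvd_add_left (Dvd.intro_left _ rfl)).1 (Dvd.intro_left _ e.symm)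
    by_contra h0
    have := Nat.le_of_dvd (by omega) this
    omega
  subst hn0
  set c := u.leadingCoeff with hcdef
  have hc1 : u.coeff 1 = c := by rw [hcdef, leadingCoeff, hndef]
  set q := u.coeff 0 with hq
  have hueq : u = C c * X + C q := by
    rw [← hc1]; exact eq_X_add_C_of_natDegree_le_one (by omega)
  have hdu1 : derivative u = C c := by rw [hueq]; simp
  have hsq : s = dy q := by rw [hq, ← huy, hs, coeff_C_zero]
  have huxeq : ux = C (dx c) * X + C (dx q) := by
    rw [hq, ← hc1, ← hux, ← hux]; exact eq_X_add_C_of_natDegree_le_one (by omega)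
  have G1 : C (dx c) * X + C (c * dx q - dx c * q) + C c * vy + C (c * s) * derivative v = 0 := by
    apply comp_inj _ u hn
    simp only [add_comp, mul_comp, C_comp, X_comp]
    rw [hs, huxeq] at E1
    have e2 := hueq
    simp only [C_mul, C_sub]
    linear_combination C c * E1 + C (dx c) * e2
  have hcx : dx c = 0 := by
    apply P2
    have := congrArg (fun p => coeff p 1) G1
    rw [C_mul, mul_assoc] at this
    simp only [coeff_add, coeff_C_mul, coeff_X_one, coeff_C, one_ne_zero, if_false, coeff_zero,
      coeff_derivative] at this
    refine ⟨-(vy.coeff 1 + s * (v.coeff 2 * 2)), ?_⟩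
    norm_num at this
    linear_combination this
  have F1 : C (dx q) + vy + C s * derivative v = 0 := by
    have : C c * (C (dx q) + vy + C s * derivative v) = 0 := by
      rw [hcx] at G1
      simp only [C_mul, C_sub, C_0] at G1
      linear_combination G1
    simpa [hc0] using this
  have F2 : - C (dx q) * vy + C s * vx + C c * p = 0 := by
    have : vy * (vy + derivative v * C s) + C s * vx + C c * p = 0 := by
      apply comp_inj _ u hn
      rw [hdu1] at key
      simp only [neg_comp, add_comp, mul_comp, C_comp] at key ⊢
      linear_combination key
    linear_combination this - vy * F1
  have F1t := congrArg (fun p => coeff p (m + 1)) F1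
  have F2t := congrArg (fun p => coeff p (m + 1)) F2
  have F3t := congrArg (fun p => coeff p (m + 1)) F3
  have F3tt := congrArg (fun p => coeff p (m + 2)) F3
  have F10 := congrArg (fun p => coeff p 0) F1
  have F20 := congrArg (fun p => coeff p 0) F2
  have F30 := congrArg (fun p => coeff p 0) F3
  simp only [hp, coeff_add, coeff_C_mul, coeff_mul_C, hvx, hvy, hdvt, coeff_C, neg_mul, coeff_neg,
    coeff_zero, hvmy, zero_mul, Nat.add_eq_zero_iff, one_ne_zero, and_false, if_false, if_true]
    at F1t F2t F3t F3tt F10 F20 F30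
  by_cases hy : dy h = 0
  · have hx : dx h ≠ 0 := fun h => hne ⟨h, hy⟩
    have hvy0 : vy = 0 := by simpa [hy, hx] using F3.symm
    have : dy (v.coeff (m + 1)) = 0 := by rw [← hvy, hvy0, coeff_zero]
    have hs0 : s = 0 := by simpa [this, hm2, hvm] using F1t
    rw [hvy0, hs0, hp, hy] at F2
    simp [hc0, hx] at F2
  · have hvmx : dx (v.coeff (m + 2)) = 0 := by simpa [hy] using F3tt
    have hd2 : ∀ d : Derivation ℤ A A, d ((m : A) + 2) = 0 := fun d => by
      have := d.map_natCast (m + 2)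
      push_cast at this
      exact this
    refine endgame dx dy comm c q h (((m : A) + 2) * v.coeff (m + 2)) (v.coeff (m + 1))
      (v.coeff 0) ((derivative v).coeff 0) hc0 hcx hcy (mul_ne_zero hm2 hvm) ?_ ?_ hy
      ?_ ?_ F3t ?_ ?_ F30
    · rw [Derivation.leibniz, hvmx, hd2 dx]; simp
    · rw [Derivation.leibniz, hvmy, hd2 dy]; simp
    · rw [← hsq]; linear_combination F1t
    · rw [← hsq]; linear_combination F2t
    · rw [← hsq]; linear_combination F10
    · rw [← hsq]; linear_combination F20
end Stmt12

namespace Stmt12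
open MvPolynomial

section
variable {σ K : Type*} [Field K] [CharZero K]

theorem pderiv_eq_zero_iff (i : σ) (p : MvPolynomial σ K) :
    pderiv i p = 0 ↔ p.degreeOf i = 0 := by
  classical
  constructor
  · intro h
    rw [← Nat.le_zero, degreeOf_le_iff]
    intro m hm
    by_contra h0
    have e : m - Finsupp.single i 1 + Finsupp.single i 1 = m := by
      apply tsub_add_cancel_of_le
      rw [Finsupp.single_le_iff]; omega
    have := congrArg (coeff (m - Finsupp.single i 1)) h
    rw [coeff_pderiv, e, coeff_zero] at this
    rcases mul_eq_zero.1 this with h1 | h1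
    · exact (mem_support_iff.1 hm) h1
    · exact Nat.cast_add_one_ne_zero _ h1
  · intro h
    ext m
    rw [coeff_pderiv, coeff_zero]
    by_cases h0 : coeff (m + Finsupp.single i 1) p = 0
    · rw [h0, zero_mul]
    · have := (degreeOf_le_iff.1 h.le) _ (mem_support_iff.2 h0)
      simp at this

theorem degreeOf_pderiv_lt (i : σ) (p : MvPolynomial σ K) (h : pderiv i p ≠ 0) :
    (pderiv i p).degreeOf i < p.degreeOf i := by
  classical
  have hpos : p.degreeOf i ≠ 0 := fun h0 => h ((pderiv_eq_zero_iff i p).2 h0)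
  rw [degreeOf_lt_iff (by omega)]
  intro m hm
  rw [mem_support_iff, coeff_pderiv] at hm
  have := (degreeOf_le_iff (n := i) (f := p)).1 le_rfl _ (mem_support_iff.2 (left_ne_zero_of_mul hm))
  simp at this
  omega

theorem P1 (i : σ) (p q : MvPolynomial σ K) (h : p * q ≠ 0) (h1 : pderiv i (p * q) = 0) :
    pderiv i p = 0 := by
  rw [pderiv_eq_zero_iff] at *
  rw [degreeOf_mul_eq (left_ne_zero_of_mul h) (right_ne_zero_of_mul h)] at h1
  omega

theorem P2 (i : σ) (p : MvPolynomial σ K) (h : p ∣ pderiv i p) : pderiv i p = 0 := by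
  by_contra h0
  have h2 := degreeOf_pderiv_lt i p h0
  obtain ⟨r, hr⟩ := h
  rw [hr] at h0
  rw [hr, degreeOf_mul_eq (left_ne_zero_of_mul h0) (right_ne_zero_of_mul h0)] at h2
  omega

theorem pd_comm (i j : σ) (p : MvPolynomial σ K) :
    pderiv i (pderiv j p) = pderiv j (pderiv i p) := by
  classical
  rcases eq_or_ne i j with rfl | h
  · rfl
  ext m
  simp only [coeff_pderiv, add_right_comm m, Finsupp.add_apply, Finsupp.single_apply, h, h.symm,
    if_false, add_zero]
  ring

theorem eq_C_of_pd (p : MvPolynomial σ K) (h : ∀ i, pderiv i p = 0) :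
    p = C (constantCoeff p) := by
  classical
  ext m
  rw [coeff_C]
  split_ifs with h0
  · rw [← h0]; rfl
  · obtain ⟨i, hi⟩ : ∃ i, m i ≠ 0 := by
      by_contra h1
      push Not at h1
      exact h0 (Finsupp.ext fun i => by simp [h1])
    by_contra h2
    have := degreeOf_le_iff.1 ((pderiv_eq_zero_iff i p).1 (h i)).le _ (mem_support_iff.2 h2)
    omega

theorem chain {τ : Type*} [Fintype σ] (f : σ → MvPolynomial τ K) (j : τ) (p : MvPolynomial σ K) :
    pderiv j (aeval f p) = ∑ i, aeval f (pderiv i p) * pderiv j (f i) := by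
  classical
  induction p using MvPolynomial.induction_on with
  | C a => simp [algebraMap_eq]
  | add p q hp hq => simp only [map_add, hp, hq, add_mul, Finset.sum_add_distrib]
  | mul_X p k hp =>
    simp only [map_mul, aeval_X, Derivation.leibniz, hp, smul_eq_mul, map_add, add_mul,
      Finset.sum_add_distrib, pderiv_X, Finset.mul_sum]
    congr 1
    · rw [Finset.sum_eq_single k]
      · simp
      · intro b _ hb; simp [Pi.single_apply, hb]
      · simp
    · apply Finset.sum_congr rfl; intros; ring

theorem coeff_X_mul_pd (i : σ) (p : MvPolynomial σ K) (m : σ →₀ ℕ) :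
    coeff m (X i * pderiv i p) = m i * coeff m p := by
  classical
  rw [coeff_X_mul']
  split_ifs with h
  · have e : m - Finsupp.single i 1 + Finsupp.single i 1 = m := by
      apply tsub_add_cancel_of_le
      rw [Finsupp.single_le_iff]
      have := Finsupp.mem_support_iff.1 h
      omega
    have e2 := DFunLike.congr_fun e i
    simp only [Finsupp.add_apply, Finsupp.single_eq_same] at e2
    rw [coeff_pderiv, e, ← e2, mul_comm]
    push_cast
    rfl
  · simp [Finsupp.notMem_support_iff.1 h]
end

variable {K : Type*} [Field K] [CharZero K]

theorem euler (P : MvPolynomial (Fin 3) K) (e a0 b0 : K) (he : e ≠ 0)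
    (hz : pderiv 2 P = 0)
    (h : (C e * X 0 + C b0) * pderiv 0 P + (C e * X 1 + C a0) * pderiv 1 P = 0) :
    pderiv 1 P = 0 := by
  by_cases hP : P = 0
  · simp [hP]
  obtain ⟨m, hm, hmd⟩ := Finset.exists_mem_eq_sup P.support (by simpa using hP)
    (fun s => s.sum fun _ e => e)
  have hmd : P.totalDegree = m.degree := hmd
  have hbig : ∀ i, coeff (m + Finsupp.single i 1) P = 0 := by
    intro i
    by_contra h0
    have := le_totalDegree (mem_support_iff.2 h0)
    change (m + Finsupp.single i 1).degree ≤ _ at this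
    rw [hmd, map_add, Finsupp.degree_single] at this
    omega
  have h2 := congrArg (coeff m) h
  rw [(by ring : (C e * X 0 + C b0) * pderiv 0 P + (C e * X 1 + C a0) * pderiv 1 P
    = C e * (X 0 * pderiv 0 P) + C b0 * pderiv 0 P + C e * (X 1 * pderiv 1 P)
      + C a0 * pderiv 1 P)] at h2
  simp only [coeff_add, coeff_C_mul, coeff_X_mul_pd] at h2
  rw [coeff_pderiv, coeff_pderiv, hbig, hbig] at h2
  have h3 : e * coeff m P * ((m 0 + m 1 : ℕ) : K) = 0 := by
    push_cast
    rw [coeff_zero] at h2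
    linear_combination h2
  have h4 : m 0 + m 1 = 0 := by
    have := mem_support_iff.1 hm
    simpa [he, this, -Nat.cast_add] using h3
  have h5 := degreeOf_le_iff.1 ((pderiv_eq_zero_iff 2 P).1 hz).le _ hm
  have h6 : P.totalDegree = 0 := by
    rw [hmd, Finsupp.degree_eq_sum, Fin.sum_univ_three]; omega
  rw [(totalDegree_eq_zero_iff_eq_C).1 h6, pderiv_C]

theorem caseII (P Q : MvPolynomial (Fin 3) K) (hPz : pderiv 2 P = 0) (hQz : pderiv 2 Q = 0)
    (htr : pderiv 0 P + pderiv 1 Q = 0)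
    (hdet : pderiv 0 P * pderiv 1 Q - pderiv 1 P * pderiv 0 Q = 0) :
    ∃ α β : K, (α ≠ 0 ∨ β ≠ 0) ∧ ∀ i, pderiv i (C α * P + C β * Q) = 0 := by
  by_cases hPy : pderiv 1 P = 0
  · refine ⟨1, 0, Or.inl one_ne_zero, ?_⟩
    have : pderiv 0 P = 0 := by
      have : pderiv 0 P * pderiv 0 P = 0 := by
        linear_combination -hdet + pderiv 0 P * htr - pderiv 0 Q * hPy
      simpa using this
    intro i
    fin_cases i <;> simp [*]
  obtain ⟨b, a, g, hrel, hb, ha⟩ :=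
    UniqueFactorizationMonoid.exists_reduced_factors (pderiv 1 P) hPy (pderiv 0 P)
  have hg0 : g ≠ 0 := by rintro rfl; simp at hb; exact hPy hb.symm
  have hb0 : b ≠ 0 := by rintro rfl; simp at hb; exact hPy hb.symm
  by_cases ha0 : a = 0
  · have hPx : pderiv 0 P = 0 := by rw [← ha, ha0, mul_zero]
    have hQy : pderiv 1 Q = 0 := by linear_combination htr - hPx
    have hQx : pderiv 0 Q = 0 := by
      rw [hPx] at hdet
      simpa [hPy] using hdet
    refine ⟨0, 1, Or.inr one_ne_zero, ?_⟩
    intro i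
    fin_cases i <;> simp [*]
  have hQy : pderiv 1 Q = - pderiv 0 P := by linear_combination htr
  have r1 : b * pderiv 0 P = a * pderiv 1 P := by rw [← hb, ← ha]; ring
  have r2 : b * pderiv 0 Q = - (a * pderiv 0 P) := by
    apply mul_left_cancel₀ hg0
    linear_combination -hdet + pderiv 0 P * htr + pderiv 0 Q * hb + pderiv 0 P * ha
  have r3 := congrArg (pderiv 1) r2
  have r4 := congrArg (pderiv 0) r1
  simp only [Derivation.leibniz, map_neg, smul_eq_mul] at r3 r4
  rw [pd_comm 1 0 Q, hQy, map_neg, pd_comm 1 0 P] at r3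
  have burgers : pderiv 0 a * b ^ 2 - a * b * pderiv 0 b - a * b * pderiv 1 a
      + a ^ 2 * pderiv 1 b = 0 := by
    apply mul_left_cancel₀ hPy
    linear_combination (-b ^ 2) * (r3 + r4)
      + (b * pderiv 1 b) * r2 + (-a * pderiv 1 b + b * pderiv 0 b + b * pderiv 1 a) * r1
  have hby : pderiv 1 b = 0 := by
    apply P2
    have : b ∣ a ^ 2 * pderiv 1 b :=
      ⟨-(pderiv 0 a * b - a * pderiv 0 b - a * pderiv 1 a), by linear_combination burgers⟩
    exact (hrel.pow_right (n := 2)).dvd_of_dvd_mul_left this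
  have hax : pderiv 0 a = 0 := by
    apply P2
    have : a ∣ pderiv 0 a * b ^ 2 :=
      ⟨(b * pderiv 0 b + b * pderiv 1 a - a * pderiv 1 b), by linear_combination burgers⟩
    exact (hrel.symm.pow_right (n := 2)).dvd_of_dvd_mul_right this
  have hbz : pderiv 2 b = 0 := by
    apply P1 2 b g
    · rw [mul_comm, hb]; exact hPy
    · rw [mul_comm, hb, pd_comm, hPz, map_zero]
  have haz : pderiv 2 a = 0 := by
    apply P1 2 a g
    · exact mul_ne_zero ha0 hg0
    · rw [mul_comm, ha, pd_comm, hPz, map_zero]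
  have hbx : pderiv 0 b = - pderiv 1 a := by
    have : a * b * (pderiv 0 b + pderiv 1 a) = 0 := by
      rw [hby, hax] at burgers
      linear_combination -burgers
    have := (mul_eq_zero.1 this).resolve_left (mul_ne_zero ha0 hb0)
    linear_combination this
  obtain ⟨e, he⟩ : ∃ e, pderiv 0 b = C e := by
    refine ⟨_, eq_C_of_pd _ ?_⟩
    intro i
    fin_cases i
    · change pderiv 0 (pderiv 0 b) = 0
      rw [hbx, map_neg, pd_comm, hax, map_zero, neg_zero]
    · change pderiv 1 (pderiv 0 b) = 0
      rw [pd_comm, hby, map_zero]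
    · change pderiv 2 (pderiv 0 b) = 0
      rw [pd_comm, hbz, map_zero]
  have hay : pderiv 1 a = - C e := by rw [← he, hbx, neg_neg]
  obtain ⟨b1, hb1⟩ : ∃ b1, b - C e * X 0 = C b1 := by
    refine ⟨_, eq_C_of_pd _ ?_⟩
    intro i
    fin_cases i <;> simp [*, pderiv_X]
  obtain ⟨a1, ha1⟩ : ∃ a1, a + C e * X 1 = C a1 := by
    refine ⟨_, eq_C_of_pd _ ?_⟩
    intro i
    fin_cases i <;> simp [*, pderiv_X]
  by_cases he0 : e = 0
  · have hbC : b = C b1 := by rw [← hb1, he0]; simp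
    have haC : a = C a1 := by rw [← ha1, he0]; simp
    refine ⟨a1, b1, Or.inr ?_, ?_⟩
    · rintro rfl; simp at hbC; exact hb0 hbC
    · intro i
      rw [map_add, pderiv_C_mul, pderiv_C_mul, ← hbC, ← haC]
      fin_cases i
      · change a * pderiv 0 P + b * pderiv 0 Q = 0
        linear_combination r2
      · change a * pderiv 1 P + b * pderiv 1 Q = 0
        rw [hQy]; linear_combination -r1
      · change a * pderiv 2 P + b * pderiv 2 Q = 0
        rw [hPz, hQz]; ring
  · exfalso
    apply hPy
    apply euler P e (-a1) b1 he0 hPz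
    rw [C_neg, ← hb1, ← ha1]
    linear_combination r1

/-- View the third variable as the polynomial variable. -/
noncomputable def Phi (K : Type*) [Field K] :
    MvPolynomial (Fin 3) K →ₐ[K] Polynomial (MvPolynomial (Fin 2) K) :=
  (finSuccEquiv K 2).toAlgHom.comp (rename (fun i : Fin 3 => i + 1))

theorem Phi_apply (p : MvPolynomial (Fin 3) K) :
    Phi K p = finSuccEquiv K 2 (rename (fun i : Fin 3 => i + 1) p) := rfl

theorem Phi_inj : Function.Injective (Phi K) := by
  intro p q h
  rw [Phi_apply, Phi_apply] at h
  exact rename_injective _ (add_left_injective 1) ((finSuccEquiv K 2).injective h)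

theorem Phi_natDegree (p : MvPolynomial (Fin 3) K) : (Phi K p).natDegree = p.degreeOf 2 := by
  rw [Phi_apply, natDegree_finSuccEquiv]
  exact degreeOf_rename_of_injective (f := fun i : Fin 3 => i + 1) (add_left_injective 1) 2

theorem Phi_d2 (p : MvPolynomial (Fin 3) K) :
    Phi K (pderiv 2 p) = Polynomial.derivative (Phi K p) := by
  rw [Phi_apply, Phi_apply, ← pderiv_rename (f := fun i : Fin 3 => i + 1) (add_left_injective 1)]
  change finSuccEquiv K 2 (pderiv 0 _) = _
  ext i m
  rw [finSuccEquiv_coeff_coeff, coeff_pderiv, Polynomial.coeff_derivative]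
  have e : Finsupp.cons i m + Finsupp.single (0 : Fin 3) 1 = Finsupp.cons (i + 1) m := by
    ext j
    refine Fin.cases ?_ (fun k => ?_) j <;> simp
  rw [e, (by push_cast; rfl : ((i : MvPolynomial (Fin 2) K) + 1) = ((i + 1 : ℕ) : MvPolynomial (Fin 2) K)),
    ← map_natCast (C : K →+* MvPolynomial (Fin 2) K), mul_comm _ (C _), coeff_C_mul, finSuccEquiv_coeff_coeff, mul_comm]
  simp

theorem Phi_dk (k : Fin 2) (p : MvPolynomial (Fin 3) K) (i : ℕ) :
    (Phi K (pderiv k.castSucc p)).coeff i = pderiv k ((Phi K p).coeff i) := by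
  rw [Phi_apply, Phi_apply, ← pderiv_rename (f := fun i : Fin 3 => i + 1) (add_left_injective 1)]
  have : (k.castSucc + 1 : Fin 3) = k.succ := by fin_cases k <;> rfl
  simp only [this]
  ext m
  rw [finSuccEquiv_coeff_coeff, coeff_pderiv, coeff_pderiv, finSuccEquiv_coeff_coeff]
  have e : Finsupp.cons i m + Finsupp.single (k.succ : Fin 3) 1
      = Finsupp.cons i (m + Finsupp.single k 1) := by
    ext j
    refine Fin.cases ?_ (fun k => ?_) j <;> simp [Finsupp.single_apply]
  rw [e]
  simp

theorem Phi_comp (u p : MvPolynomial (Fin 3) K) :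
    Phi K (aeval ![X 0, X 1, u] p) = (Phi K p).comp (Phi K u) := by
  have X0 : Phi K (X 0) = Polynomial.C (X 0) := by
    rw [Phi_apply, rename_X]; exact finSuccEquiv_X_succ (j := 0)
  have X1 : Phi K (X 1) = Polynomial.C (X 1) := by
    rw [Phi_apply, rename_X]; exact finSuccEquiv_X_succ (j := 1)
  have X2 : Phi K (X 2) = Polynomial.X := by
    rw [Phi_apply, rename_X]; exact finSuccEquiv_X_zero
  induction p using MvPolynomial.induction_on with
  | C a =>
    have : Phi K (C a) = Polynomial.C (C a) := by
      rw [← algebraMap_eq, AlgHom.commutes]; rfl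
    rw [aeval_C, algebraMap_eq, this, Polynomial.C_comp]
  | add p q hp hq => simp only [map_add, hp, hq, Polynomial.add_comp]
  | mul_X p k hp =>
    have hk : Phi K (![X 0, X 1, u] k) = (Phi K (X k)).comp (Phi K u) := by
      fin_cases k
      · change Phi K (X 0) = (Phi K (X 0)).comp (Phi K u)
        rw [X0, Polynomial.C_comp]
      · change Phi K (X 1) = (Phi K (X 1)).comp (Phi K u)
        rw [X1, Polynomial.C_comp]
      · change Phi K u = (Phi K (X 2)).comp (Phi K u)
        rw [X2, Polynomial.X_comp]
    rw [map_mul, map_mul, hp, map_mul, Polynomial.mul_comp, aeval_X, hk]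
end Stmt12

open MvPolynomial

theorem stmt_12 (K : Type*) [Field K] [IsAlgClosed K] [CharZero K]
    (u v h : MvPolynomial (Fin 3) K)
    (hh : pderiv (2 : Fin 3) h = 0)
    (hdegv : 2 ≤ MvPolynomial.degreeOf (2 : Fin 3) v)
    (H : Fin 3 → MvPolynomial (Fin 3) K)
    (hH : H = ![u, MvPolynomial.aeval ![MvPolynomial.X 0, MvPolynomial.X 1, u] v, h])
    (hH0 : ∀ i, MvPolynomial.constantCoeff (H i) = 0)
    (hnil : IsNilpotent (Matrix.of fun i j : Fin 3 => pderiv j (H i))) :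
    ∃ l : Fin 3 → K, l ≠ 0 ∧
      MvPolynomial.C (l 0) * H 0 + MvPolynomial.C (l 1) * H 1 + MvPolynomial.C (l 2) * H 2
        = 0 := by
  have T1 := (Matrix.isNilpotent_trace_of_isNilpotent hnil).eq_zero
  have T2 := (Matrix.isNilpotent_trace_of_isNilpotent (hnil.pow_succ 1)).eq_zero
  have T3 : (Matrix.of fun i j : Fin 3 => pderiv j (H i)).det = 0 := by
    obtain ⟨n, hn⟩ := hnil
    have := congrArg Matrix.det hn
    rw [Matrix.det_pow, Matrix.det_zero] at this
    exact eq_zero_of_pow_eq_zero this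
  have h0 : H 0 = u := by rw [hH]; rfl
  have h1 : H 1 = aeval ![X 0, X 1, u] v := by rw [hH]; rfl
  have h2 : H 2 = h := by rw [hH]; rfl
  have two : (2 : MvPolynomial (Fin 3) K) ≠ 0 := by
    exact_mod_cast (by norm_num : (2 : ℕ) ≠ 0)
  simp only [Matrix.trace_fin_three, Matrix.of_apply, pow_succ, pow_zero, one_mul, Matrix.mul_apply,
    Fin.sum_univ_three, Matrix.det_fin_three, h2, hh] at T1 T2 T3
  have T2' : pderiv 0 (H 0) * pderiv 1 (H 1) - pderiv 1 (H 0) * pderiv 0 (H 1)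
      - pderiv 2 (H 0) * pderiv 0 h - pderiv 2 (H 1) * pderiv 1 h = 0 := by
    apply mul_left_cancel₀ two
    linear_combination (pderiv 0 (H 0) + pderiv 1 (H 1)) * T1 - T2
  have ch : ∀ j, pderiv j (H 1) = aeval ![X 0, X 1, u] (pderiv 0 v) * pderiv j (X 0)
      + aeval ![X 0, X 1, u] (pderiv 1 v) * pderiv j (X 1)
      + aeval ![X 0, X 1, u] (pderiv 2 v) * pderiv j u := by
    intro j
    rw [h1, Stmt12.chain, Fin.sum_univ_three]
    rfl
  have ch0 : pderiv 0 (H 1) = aeval ![X 0, X 1, u] (pderiv 0 v) + aeval ![X 0, X 1, u] (pderiv 2 v) * pderiv 0 u := by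
    rw [ch 0, pderiv_X_self, pderiv_X_of_ne (by decide)]
    ring
  have ch1 : pderiv 1 (H 1) = aeval ![X 0, X 1, u] (pderiv 1 v) + aeval ![X 0, X 1, u] (pderiv 2 v) * pderiv 1 u := by
    rw [ch 1, pderiv_X_self, pderiv_X_of_ne (by decide)]
    ring
  have ch2 : pderiv 2 (H 1) = aeval ![X 0, X 1, u] (pderiv 2 v) * pderiv 2 u := by
    rw [ch 2, pderiv_X_of_ne (by decide), pderiv_X_of_ne (by decide)]
    ring
  by_cases hz : pderiv 2 u = 0
  · rw [hz, mul_zero] at ch2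
    obtain ⟨α, β, hαβ, hd⟩ := Stmt12.caseII (H 0) (H 1) (by rw [h0, hz]) ch2
      (by linear_combination T1) (by
        rw [ch2, h0, hz] at T2'
        rw [h0]; linear_combination T2')
    refine ⟨![α, β, 0], ?_, ?_⟩
    · intro hl
      have e0 := congrFun hl 0
      have e1 := congrFun hl 1
      simp at e0 e1
      tauto
    · have := Stmt12.eq_C_of_pd _ hd
      simp [hH0] at this
      simpa using this
  · have hhx : pderiv 0 h = 0 ∧ pderiv 1 h = 0 := by
      have hder : Polynomial.derivative (Stmt12.Phi K h) = 0 := by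
        rw [← Stmt12.Phi_d2, hh, map_zero]
      obtain ⟨k, hk⟩ : ∃ k, Stmt12.Phi K h = Polynomial.C k :=
        ⟨_, Polynomial.eq_C_of_derivative_eq_zero hder⟩
      have hkd : ∀ i : Fin 2, Stmt12.Phi K (pderiv i.castSucc h) = Polynomial.C (pderiv i k) := by
        intro i
        ext1 n
        rw [Stmt12.Phi_dk, hk, Polynomial.coeff_C, Polynomial.coeff_C]
        split_ifs <;> simp
      have hk0 : Stmt12.Phi K (pderiv 0 h) = Polynomial.C (pderiv 0 k) := hkd 0
      have hk1 : Stmt12.Phi K (pderiv 1 h) = Polynomial.C (pderiv 1 k) := hkd 1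
      rw [h0] at T1 T2' T3
      rw [ch0, ch1, ch2] at T3
      rw [ch0, ch1, ch2] at T2'
      rw [ch1] at T1
      have e1 : pderiv 0 u + aeval ![X 0, X 1, u] (pderiv 1 v)
          + aeval ![X 0, X 1, u] (pderiv 2 v) * pderiv 1 u = 0 := by linear_combination T1
      have e2 : pderiv 0 u * aeval ![X 0, X 1, u] (pderiv 1 v)
          - pderiv 1 u * aeval ![X 0, X 1, u] (pderiv 0 v)
          - pderiv 2 u * (pderiv 0 h + aeval ![X 0, X 1, u] (pderiv 2 v) * pderiv 1 h) = 0 := by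
        linear_combination T2'
      have e3 : pderiv 2 u * (aeval ![X 0, X 1, u] (pderiv 0 v) * pderiv 1 h
          - aeval ![X 0, X 1, u] (pderiv 1 v) * pderiv 0 h) = 0 := by
        linear_combination T3
      have E1 := congrArg (Stmt12.Phi K) e1
      have E2 := congrArg (Stmt12.Phi K) e2
      have E3 := congrArg (Stmt12.Phi K) e3
      simp only [map_add, map_sub, map_mul, map_zero, Stmt12.Phi_comp, Stmt12.Phi_d2, hk0, hk1]
        at E1 E2 E3
      have hu' : Polynomial.derivative (Stmt12.Phi K u) ≠ 0 := by
        rw [← Stmt12.Phi_d2]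
        intro h3
        exact hz (Stmt12.Phi_inj (h3.trans (map_zero _).symm))
      have hm : 2 ≤ (Stmt12.Phi K v).natDegree := by rw [Stmt12.Phi_natDegree]; exact hdegv
      have := Stmt12.caseI ((pderiv (0 : Fin 2) (R := K)).restrictScalars ℤ)
        ((pderiv (1 : Fin 2) (R := K)).restrictScalars ℤ)
        (fun a => Stmt12.pd_comm 0 1 a) (fun p q => Stmt12.P1 1 p q) (fun p => Stmt12.P2 0 p)
        (Stmt12.Phi K u) (Stmt12.Phi K (pderiv 0 u)) (Stmt12.Phi K (pderiv 1 u))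
        (Stmt12.Phi K v) (Stmt12.Phi K (pderiv 0 v)) (Stmt12.Phi K (pderiv 1 v)) k
        (Stmt12.Phi_dk 0 u) (Stmt12.Phi_dk 1 u) (Stmt12.Phi_dk 0 v) (Stmt12.Phi_dk 1 v)
        hm hu' E1 E2 E3
      obtain ⟨g0, g1⟩ := this
      change pderiv 0 k = 0 at g0
      change pderiv 1 k = 0 at g1
      rw [g0, Polynomial.C_0] at hk0
      rw [g1, Polynomial.C_0] at hk1
      exact ⟨Stmt12.Phi_inj (hk0.trans (map_zero _).symm),
        Stmt12.Phi_inj (hk1.trans (map_zero _).symm)⟩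
    refine ⟨![0, 0, 1], ?_, ?_⟩
    · intro hl
      have e0 := congrFun hl 2
      simp at e0
    · have := Stmt12.eq_C_of_pd h (by
        intro i
        fin_cases i
        · exact hhx.1
        · exact hhx.2
        · exact hh)
      have hc := hH0 2
      rw [h2] at hc
      rw [hc, C_0] at this
      simp [h2, this]
end

section
/- Let K be an algebraically closed field of characteristic zero. Let H = (u(x,y,z), v(x,y,z), h(x,y)) be a polynomial map from K^3 to K^3 with H(0) = 0, where deg_z v = 1 and deg_z u ≥ 2. If the Jacobian matrix JH is nilpotent, then u, v, h are linearly dependent over K. -/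
open Polynomial in
lemma core_lemma {R : Type*} [CommRing R] [IsDomain R] [CharZero R]
    (dx dy : R → R) (dx0 : dx 0 = 0) (dy0 : dy 0 = 0)
    (hA : ∀ p q s : R, p ≠ 0 → q ≠ 0 → dy p * q = 3 * p * dy q → dy q ^ 2 = -(3 * p * s) → dy q = 0)
    (hB : ∀ p q s : R, p ≠ 0 → q ≠ 0 → dy p * q = 2 * p * dy q → dy q * q = -(2 * p * s) → dy q = 0)
    (U V ux uy vx vy : R[X]) (hx hy : R)
    (hux : ∀ n, ux.coeff n = dx (U.coeff n)) (huy : ∀ n, uy.coeff n = dy (U.coeff n))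
    (hvx : ∀ n, vx.coeff n = dx (V.coeff n)) (hvy : ∀ n, vy.coeff n = dy (V.coeff n))
    (hV : V.natDegree = 1) (hU : 2 ≤ U.natDegree)
    (tr : ux + vy = 0)
    (sec : ux * vy - uy * vx - derivative U * C hx - derivative V * C hy = 0)
    (det : C hx * (uy * derivative V - derivative U * vy)
      - C hy * (ux * derivative V - derivative U * vx) = 0) :
    hx = 0 ∧ hy = 0 := by
  obtain ⟨v1, v0, hv1, rfl⟩ : ∃ v1 v0 : R, v1 ≠ 0 ∧ V = C v1 * X + C v0 := by
    refine ⟨V.coeff 1, V.coeff 0, ?_, ?_⟩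
    · rw [← hV]
      intro h0
      have := leadingCoeff_eq_zero.1 h0
      rw [this] at hV
      simp at hV
    · exact eq_X_add_C_of_natDegree_le_one hV.le
  have hVd : derivative (C v1 * X + C v0) = C v1 := by simp
  rw [hVd] at sec det
  have vyform : vy = C (dy v1) * X + C (vy.coeff 0) := by
    ext n
    rcases n with _ | _ | n
    · simp
    · rw [hvy]; simp
    · rw [hvy]; simp [coeff_X, coeff_C, dy0]
  have hvy' : vy = -ux := by linear_combination tr
  have uxdeg : ux.natDegree ≤ 1 := by
    have : ux = - vy := by linear_combination tr
    rw [this, natDegree_neg, vyform]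
    exact natDegree_linear_le
  have hUd : (derivative U).natDegree = U.natDegree - 1 := natDegree_derivative U
  have hud : U.coeff U.natDegree ≠ 0 := by
    intro h0
    have := leadingCoeff_eq_zero.1 h0
    rw [this] at hU
    simp at hU
  have hU0 : derivative U ≠ 0 := by
    intro h0
    rw [h0] at hUd
    simp at hUd
    omega
  have h1n : ∀ p : R[X], p.natDegree ≠ 0 → p ≠ 0 := by
    rintro p hp rfl; simp at hp
  have e1 : ux.coeff 1 = - dy v1 := by
    have : ux = - vy := by linear_combination tr
    rw [this, coeff_neg, hvy]; simp
  have uxform := eq_X_add_C_of_natDegree_le_one uxdeg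
  have uxsq : (ux ^ 2).coeff 2 = dy v1 ^ 2 := by
    rw [sq, uxform, mul_add, coeff_add, ← mul_assoc, coeff_mul_X, coeff_mul_C]
    simp [e1, coeff_X, coeff_C]
    ring
  by_cases h0 : hx = 0
  · refine ⟨h0, ?_⟩
    subst h0
    by_contra hy0
    have det' : ux * C v1 = derivative U * vx := by
      have : C hy * (ux * C v1 - derivative U * vx) = 0 := by
        simp at det; simp; tauto
      rcases mul_eq_zero.1 this with h | h
      · simp [hy0] at h
      · linear_combination h
    have sec' : ux ^ 2 + uy * vx + C v1 * C hy = 0 := by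
      simp only [map_zero] at sec
      linear_combination -sec + ux * tr
    have hw : vx ≠ 0 := by
      intro hw
      rw [hw] at det' sec'
      have : ux = 0 := by simpa [hv1] using det'
      simp [this, hv1, hy0] at sec'
    have hd := congrArg natDegree det'
    rw [natDegree_mul_C hv1, natDegree_mul hU0 hw, hUd] at hd
    have hd2 : U.natDegree = 2 := by omega
    have hw0 : vx.natDegree = 0 := by omega
    obtain ⟨w, rfl⟩ := natDegree_eq_zero.1 hw0
    have hw' : w ≠ 0 := by simpa using hw
    rw [hd2] at hud
    have c1 := congrArg (fun p => coeff p 1) det'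
    simp only [coeff_mul_C, coeff_derivative, e1] at c1
    have c2 := congrArg (fun p => coeff p 2) sec'
    rw [← C_mul] at c2
    simp only [coeff_add, coeff_mul_C, huy, uxsq, coeff_C, coeff_zero] at c2
    norm_num at c2
    norm_num at c1
    have hq : dy v1 ≠ 0 := by
      intro hq
      rw [hq] at c1
      simp at c1
      tauto
    refine hq (hB (U.coeff 2) v1 w hud hv1 ?_ ?_)
    · apply mul_left_cancel₀ hq
      linear_combination -2 * (U.coeff 2) * c2 - dy (U.coeff 2) * c1
    · linear_combination -c1
  · exfalso
    obtain ⟨P, hP⟩ : ∃ P, P = derivative U * C hx + C v1 * C hy := ⟨_, rfl⟩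
    obtain ⟨B, hBd⟩ : ∃ B, B = ux * C v1 - derivative U * vx := ⟨_, rfl⟩
    obtain ⟨E, hE⟩ : ∃ E, E = B * vx + C v1 ^ 2 * C hx := ⟨_, rfl⟩
    have Pdeg : P.natDegree = U.natDegree - 1 := by
      rw [hP, ← C_mul, natDegree_add_C, natDegree_mul_C h0, hUd]
    have P0 : P ≠ 0 := h1n _ (by omega)
    have id1 : B ^ 2 * C hx + E * P = 0 := by
      have hBD : B * (ux * C hx + vx * C hy) = - C v1 * C hx * P := by
        subst hBd hP
        rw [hvy'] at sec det
        linear_combination -vx * det + (- C v1 * C hx) * sec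
      have : B * C hx + vx * P = C v1 * (ux * C hx + vx * C hy) := by
        subst hBd hP; ring
      subst hE
      linear_combination B * this + C v1 * hBD
    have id2 : E * (C hx * (E - 2 * B * vx) - P * vx ^ 2) = C (hx ^ 3 * v1 ^ 4) := by
      simp only [map_mul, map_pow]
      have : C v1 ^ 2 * C hx = E - B * vx := by rw [hE]; ring
      linear_combination (-(vx ^ 2)) * id1 - C hx * (C v1 ^ 2 * C hx + E - B * vx) * this
    have ne : hx ^ 3 * v1 ^ 4 ≠ 0 := by positivity
    have neC : C (hx ^ 3 * v1 ^ 4) ≠ 0 := by simpa using ne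
    rw [← id2] at neC
    have E0 := left_ne_zero_of_mul neC
    have G0 := right_ne_zero_of_mul neC
    have Ed : E.natDegree = 0 := by
      have := congrArg natDegree id2
      rw [natDegree_mul E0 G0, natDegree_C] at this
      omega
    have Bd : 2 * B.natDegree = U.natDegree - 1 := by
      have : B ^ 2 * C hx = -(E * P) := by linear_combination id1
      have := congrArg natDegree this
      rw [natDegree_mul_C h0, natDegree_neg, natDegree_mul E0 P0, natDegree_pow, Ed, Pdeg] at this
      omega
    have B0 : B ≠ 0 := h1n _ (by omega)
    have w0 : vx = 0 := by
      by_contra hw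
      have : B * vx = E - C (v1 ^ 2 * hx) := by rw [hE]; simp
      have := congrArg natDegree this
      rw [natDegree_mul B0 hw, natDegree_sub_C, Ed] at this
      omega
    subst w0
    have sq : ux ^ 2 + P = 0 := by
      rw [hP]
      linear_combination ux * tr - sec
    have d3 : U.natDegree = 3 := by
      have : ux ^ 2 = - P := by linear_combination sq
      have := congrArg natDegree this
      rw [natDegree_pow, natDegree_neg, Pdeg] at this
      omega
    rw [d3] at hud
    have c2 := congrArg (fun p => coeff p 2) sq
    rw [hP, ← C_mul] at c2
    simp only [coeff_add, coeff_mul_C, coeff_derivative, uxsq, coeff_C, coeff_zero] at c2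
    norm_num at c2
    have c3 := congrArg (fun p => coeff p 3) det
    have u4 : U.coeff 4 = 0 := coeff_eq_zero_of_natDegree_lt (by omega)
    have ux3 : ux.coeff 3 = 0 := coeff_eq_zero_of_natDegree_lt (by omega)
    have m3 : (derivative U * vy).coeff 3 = U.coeff 3 * 3 * dy v1 := by
      rw [vyform, mul_add, ← mul_assoc, coeff_add, coeff_mul_X, coeff_mul_C, coeff_mul_C,
        coeff_derivative, coeff_derivative, u4]
      norm_num
    simp [m3, huy, ux3, h0] at c3
    have hq0 := hA (U.coeff 3) v1 hx hud hv1 (by linear_combination c3) (by linear_combination c2)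
    rw [hq0] at c2
    norm_num [hud, h0] at c2

open Polynomial in
lemma deg_lemma {R : Type*} [CommRing R] [IsDomain R] [CharZero R] (k : ℕ) (p q : R[X])
    (hp : p ≠ 0) (hq : q ≠ 0) (h : derivative p * q = k * p * derivative q) :
    p.natDegree = k * q.natDegree := by
  have c := congrArg (fun r => coeff (r * X) (p.natDegree + q.natDegree)) h
  have lp : (derivative p * X).coeff p.natDegree = p.natDegree * p.leadingCoeff := by
    rcases hn : p.natDegree with _ | n
    · simp
    · rw [coeff_mul_X, coeff_derivative, leadingCoeff, hn]; push_cast; ring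
  have lq : (derivative q * X).coeff q.natDegree = q.natDegree * q.leadingCoeff := by
    rcases hn : q.natDegree with _ | n
    · simp
    · rw [coeff_mul_X, coeff_derivative, leadingCoeff, hn]; push_cast; ring
  have bd : ∀ r : R[X], (derivative r * X).natDegree ≤ r.natDegree := by
    intro r
    by_cases h0 : r.natDegree = 0
    · rw [natDegree_eq_zero] at h0
      obtain ⟨c, rfl⟩ := h0
      simp
    · refine natDegree_mul_le.trans ?_
      have := natDegree_derivative_le r
      simp
      omega
  have e1 : derivative p * q * X = (derivative p * X) * q := by ring
  have e2 : (k : R[X]) * p * derivative q * X = C (k : R) * (p * (derivative q * X)) := by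
    simp; ring
  simp only [e1, e2, coeff_C_mul] at c
  rw [coeff_mul_add_eq_of_natDegree_le (bd p) le_rfl, coeff_mul_add_eq_of_natDegree_le le_rfl (bd q), lp, lq] at c
  change _ * q.leadingCoeff = k * (p.leadingCoeff * _) at c
  have hl : p.leadingCoeff * q.leadingCoeff ≠ 0 := by simp [hp, hq]
  have : ((p.natDegree : ℕ) : R) = ((k * q.natDegree : ℕ) : R) := by
    apply mul_right_cancel₀ hl
    push_cast
    linear_combination c
  exact_mod_cast this

open MvPolynomial in
/-- Single out the variable `i`. -/
noncomputable def sepVar (K : Type*) [Field K] {n : ℕ} (i : Fin (n+1)) :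
    MvPolynomial (Fin (n+1)) K ≃ₐ[K] Polynomial (MvPolynomial (Fin n) K) :=
  (renameEquiv K ((finSuccEquiv' i).trans (finSuccEquiv' 0).symm)).trans (finSuccEquiv K n)

open MvPolynomial in
lemma sepVar_X_self {K : Type*} [Field K] {n : ℕ} (i : Fin (n+1)) :
    sepVar K i (X i) = Polynomial.X := by
  simp [sepVar, finSuccEquiv_X_zero]

open MvPolynomial in
lemma sepVar_X_succAbove {K : Type*} [Field K] {n : ℕ} (i : Fin (n+1)) (j : Fin n) :
    sepVar K i (X (i.succAbove j)) = Polynomial.C (X j) := by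
  simp [sepVar, finSuccEquiv_X_succ]

open MvPolynomial in
lemma sepVar_C {K : Type*} [Field K] {n : ℕ} (i : Fin (n+1)) (a : K) :
    sepVar K i (C a) = Polynomial.C (C a) := by
  simp [sepVar, finSuccEquiv_apply]

open MvPolynomial in
lemma sepVar_natDegree {K : Type*} [Field K] {n : ℕ} (i : Fin (n+1))
    (p : MvPolynomial (Fin (n+1)) K) : (sepVar K i p).natDegree = degreeOf i p := by
  have := degreeOf_rename_of_injective (p := p)
    ((finSuccEquiv' i).trans (finSuccEquiv' 0).symm).injective i
  rw [← this]
  simp only [sepVar, AlgEquiv.trans_apply, natDegree_finSuccEquiv, renameEquiv_apply]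
  simp

open MvPolynomial in
lemma nth_self {K : Type*} [Field K] {n : ℕ} (i : Fin (n+1)) (p : MvPolynomial (Fin (n+1)) K) :
    sepVar K i (pderiv i p) = Polynomial.derivative (sepVar K i p) := by
  induction p using MvPolynomial.induction_on with
  | C a => simp [sepVar_C]
  | add p q hp hq => simp [sepVar_C, sepVar_X_self, sepVar_X_succAbove, hp, hq]
  | mul_X p j hp =>
    rcases Fin.eq_self_or_eq_succAbove i j with rfl | ⟨j, rfl⟩
    · simp [sepVar_C, sepVar_X_self, sepVar_X_succAbove, hp, Derivation.leibniz]; ring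
    · simp [sepVar_C, sepVar_X_self, sepVar_X_succAbove, hp, Derivation.leibniz, Pi.single_apply]; ring

open MvPolynomial in
lemma nth_other {K : Type*} [Field K] {n : ℕ} (i : Fin (n+1)) (j : Fin n)
    (p : MvPolynomial (Fin (n+1)) K) : ∀ m,
    (sepVar K i (pderiv (i.succAbove j) p)).coeff m =
      pderiv j ((sepVar K i p).coeff m) := by
  induction p using MvPolynomial.induction_on with
  | C a => intro m; simp [sepVar_C, sepVar_X_self, sepVar_X_succAbove, Polynomial.coeff_C]; split_ifs <;> simp
  | add p q hp hq => intro m; simp [sepVar_C, sepVar_X_self, sepVar_X_succAbove, hp, hq]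
  | mul_X p k hp =>
    intro m
    rcases Fin.eq_self_or_eq_succAbove i k with rfl | ⟨k, rfl⟩
    · rcases m with _ | m
      · simp [sepVar_C, sepVar_X_self, sepVar_X_succAbove, Derivation.leibniz, Pi.single_apply]
      · simp [sepVar_C, sepVar_X_self, sepVar_X_succAbove, Derivation.leibniz, Pi.single_apply, Polynomial.coeff_X_mul, hp]
    · by_cases hjk : j = k
      · subst hjk
        simp [sepVar_X_succAbove, Derivation.leibniz, hp, mul_comm, add_comm]
      · have : k ≠ j := fun h => hjk h.symm
        simp [sepVar_C, sepVar_X_self, sepVar_X_succAbove, Derivation.leibniz, hp, mul_comm, Pi.single_apply, this, hjk]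


open MvPolynomial in
lemma sepVar_deg {K : Type*} [Field K] [CharZero K] {n : ℕ} (i : Fin (n+1)) (k : ℕ) (hk : k ≠ 0)
    (p s : MvPolynomial (Fin (n+1)) K) (hp : p ≠ 0) (hs : s ≠ 0) :
    (sepVar K i (k * p * s)).natDegree = (sepVar K i p).natDegree + (sepVar K i s).natDegree := by
  have hp' : sepVar K i p ≠ 0 := by simpa using hp
  have hs' : sepVar K i s ≠ 0 := by simpa using hs
  have hk' : (k : Polynomial (MvPolynomial (Fin n) K)) ≠ 0 := by exact_mod_cast hk
  rw [map_mul, map_mul, map_natCast, Polynomial.natDegree_mul (mul_ne_zero hk' hp') hs',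
    Polynomial.natDegree_mul hk' hp', Polynomial.natDegree_natCast, zero_add]

open MvPolynomial in
lemma eq_zero_of_pderiv {K : Type*} [Field K] [CharZero K] {n : ℕ}
    (h : MvPolynomial (Fin (n+1)) K) (h0 : constantCoeff h = 0) (hd : ∀ i, pderiv i h = 0) :
    h = 0 := by
  have h1 : ∀ i, degreeOf i h = 0 := by
    intro i
    rw [← sepVar_natDegree]
    apply Polynomial.natDegree_eq_zero_of_derivative_eq_zero
    rw [← nth_self, hd, map_zero]
  have h2 : h.vars = ∅ := by
    ext i
    have := h1 i
    classical
    rw [degreeOf_def, Multiset.count_eq_zero] at this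
    simpa [vars_def] using this
  rw [vars_eq_empty_iff_eq_C] at h2
  rw [h2, ← constantCoeff_eq, h0, C_0]

open MvPolynomial

/-- Theorem 4.1: For `H = (u(x,y,z), v(x,y,z), h(x,y))` with `H(0) = 0`,
`deg_z v = 1`, `deg_z u ≥ 2`, and `JH` nilpotent, the polynomials `u, v, h` are linearly
dependent over `K`. -/
theorem stmt_13 (K : Type*) [Field K] [IsAlgClosed K] [CharZero K]
    (u v h : MvPolynomial (Fin 3) K)
    (hh : pderiv (2 : Fin 3) h = 0)
    (hdegv : MvPolynomial.degreeOf (2 : Fin 3) v = 1)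
    (hdegu : 2 ≤ MvPolynomial.degreeOf (2 : Fin 3) u)
    (hu0 : MvPolynomial.constantCoeff u = 0)
    (hv0 : MvPolynomial.constantCoeff v = 0)
    (hh0 : MvPolynomial.constantCoeff h = 0)
    (hnil : IsNilpotent (Matrix.of fun i j : Fin 3 => pderiv j (![u, v, h] i))) :
    ∃ l : Fin 3 → K, l ≠ 0 ∧
      MvPolynomial.C (l 0) * u + MvPolynomial.C (l 1) * v + MvPolynomial.C (l 2) * h = 0 := by
  suffices h = 0 by
    refine ⟨![0, 0, 1], fun h => by simpa using congrFun h 2, by simp [this]⟩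
  have tr := (Matrix.isNilpotent_trace_of_isNilpotent hnil).eq_zero
  have tr2 := (Matrix.isNilpotent_trace_of_isNilpotent (hnil.pow_succ 1)).eq_zero
  have dt : Matrix.det (Matrix.of fun i j : Fin 3 => pderiv j (![u, v, h] i)) = 0 := by
    obtain ⟨n, hn⟩ := hnil
    have := congrArg Matrix.det hn
    rw [Matrix.det_pow, Matrix.det_zero] at this
    exact eq_zero_of_pow_eq_zero this
  rw [Matrix.trace_fin_three] at tr tr2
  rw [Matrix.det_fin_three] at dt
  simp [pow_two, Matrix.mul_apply, Fin.sum_univ_three, hh] at tr tr2 dt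
  have sec : pderiv 0 u * pderiv 1 v - pderiv 1 u * pderiv 0 v - pderiv 2 u * pderiv 0 h
      - pderiv 2 v * pderiv 1 h = 0 := by
    have : (2 : MvPolynomial (Fin 3) K) ≠ 0 := two_ne_zero
    apply mul_left_cancel₀ this
    linear_combination (pderiv 0 u + pderiv 1 v) * tr - tr2
  let φ := sepVar K (2 : Fin 3)
  have dh : Polynomial.derivative (φ h) = 0 := by rw [← nth_self, hh, map_zero]
  obtain ⟨r, hr⟩ := Polynomial.natDegree_eq_zero.1
    (Polynomial.natDegree_eq_zero_of_derivative_eq_zero dh)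
  have cx : ∀ p m, (φ (pderiv 0 p)).coeff m = pderiv 0 ((φ p).coeff m) := nth_other 2 0
  have cy : ∀ p m, (φ (pderiv 1 p)).coeff m = pderiv 1 ((φ p).coeff m) := nth_other 2 1
  have cz : ∀ p, φ (pderiv 2 p) = Polynomial.derivative (φ p) := nth_self 2
  have hx : φ (pderiv 0 h) = Polynomial.C (pderiv 0 r) := by
    ext1 m
    rw [cx, ← hr, Polynomial.coeff_C, Polynomial.coeff_C]
    split_ifs <;> simp
  have hy : φ (pderiv 1 h) = Polynomial.C (pderiv 1 r) := by
    ext1 m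
    rw [cy, ← hr, Polynomial.coeff_C, Polynomial.coeff_C]
    split_ifs <;> simp
  let ψ := sepVar K (1 : Fin 2)
  have py : ∀ p, ψ (pderiv 1 p) = Polynomial.derivative (ψ p) := nth_self 1
  have ψ0 : ∀ p, p ≠ 0 → ψ p ≠ 0 := by
    intro p hp; simpa using hp
  have key := core_lemma (R := MvPolynomial (Fin 2) K) (pderiv 0) (pderiv 1)
    (map_zero _) (map_zero _) ?_ ?_
    (φ u) (φ v) (φ (pderiv 0 u)) (φ (pderiv 1 u)) (φ (pderiv 0 v)) (φ (pderiv 1 v))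
    (pderiv 0 r) (pderiv 1 r) (cx u) (cy u) (cx v) (cy v)
    ((sepVar_natDegree 2 v).trans hdegv) (hdegu.trans_eq (sepVar_natDegree 2 u).symm)
    ?_ ?_ ?_
  · have hx0 : pderiv 0 h = 0 := by
      apply φ.injective
      rw [hx, key.1]; simp
    have hy0 : pderiv 1 h = 0 := by
      apply φ.injective
      rw [hy, key.2]; simp
    apply eq_zero_of_pderiv h hh0
    intro i
    fin_cases i
    · exact hx0
    · exact hy0
    · exact hh
  · intro p q s hp hq h1 h2
    by_contra hne
    have d1 := deg_lemma 3 (ψ p) (ψ q) (ψ0 p hp) (ψ0 q hq)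
      (by
        have h3 : ψ 3 = ((3 : ℕ) : Polynomial _) := map_ofNat ψ 3
        rw [← py, ← py, ← map_mul, h1, map_mul, map_mul, h3])
    have d2 := congrArg (fun t => (ψ t).natDegree) h2
    have hps : 3 * p * s ≠ 0 := by
      intro h0
      rw [h0] at h2
      simp at h2
      exact hne h2
    have hs : s ≠ 0 := right_ne_zero_of_mul hps
    have e3 : (ψ (3 * p * s)).natDegree = (ψ p).natDegree + (ψ s).natDegree :=
      sepVar_deg 1 3 (by norm_num) p s hp hs
    simp only [map_neg, Polynomial.natDegree_neg, map_pow, Polynomial.natDegree_pow] at d2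
    rw [e3,
      py, Polynomial.natDegree_derivative] at d2
    have : (ψ q).natDegree ≠ 0 := by
      intro h0
      apply ψ0 _ hne
      obtain ⟨c, hc⟩ := Polynomial.natDegree_eq_zero.1 h0
      rw [py, ← hc]
      simp
    omega
  · intro p q s hp hq h1 h2
    by_contra hne
    have d1 := deg_lemma 2 (ψ p) (ψ q) (ψ0 p hp) (ψ0 q hq)
      (by
        have h3 : ψ 2 = ((2 : ℕ) : Polynomial _) := map_ofNat ψ 2
        rw [← py, ← py, ← map_mul, h1, map_mul, map_mul, h3])
    have d2 := congrArg (fun t => (ψ t).natDegree) h2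
    have hps : 2 * p * s ≠ 0 := by
      intro h0
      rw [h0] at h2
      simp at h2
      tauto
    have hs : s ≠ 0 := right_ne_zero_of_mul hps
    have e3 : (ψ (2 * p * s)).natDegree = (ψ p).natDegree + (ψ s).natDegree :=
      sepVar_deg 1 2 (by norm_num) p s hp hs
    simp only [map_neg, Polynomial.natDegree_neg, map_mul ψ (pderiv 1 q)] at d2
    rw [e3,
      Polynomial.natDegree_mul (ψ0 _ hne) (ψ0 _ hq),
      py, Polynomial.natDegree_derivative] at d2
    have : (ψ q).natDegree ≠ 0 := by
      intro h0
      apply ψ0 _ hne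
      obtain ⟨c, hc⟩ := Polynomial.natDegree_eq_zero.1 h0
      rw [py, ← hc]
      simp
    omega
  · have := congrArg φ tr
    rwa [map_add, map_zero] at this
  · have := congrArg φ sec
    rwa [map_sub, map_sub, map_sub, map_mul, map_mul, map_mul, map_mul, map_zero, hx, hy, cz, cz]
      at this
  · have dt' : pderiv 0 h * (pderiv 1 u * pderiv 2 v - pderiv 2 u * pderiv 1 v)
      - pderiv 1 h * (pderiv 0 u * pderiv 2 v - pderiv 2 u * pderiv 0 v) = 0 := by
      linear_combination dt
    have := congrArg φ dt'
    rwa [map_sub, map_mul, map_mul, map_sub, map_sub, map_mul, map_mul, map_mul, map_mul,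
      map_zero, hx, hy, cz, cz] at this
end

section
/- Let K be an algebraically closed field of characteristic zero and H = (u(x,y), v(x,y,z), h(x,y)) a polynomial map with H(0) = 0, JH nilpotent, and u, v, h linearly independent over K. Write v = v_d z^d + ... + v_1 z + v_0 with v_i ∈ K[x,y]. Suppose additionally there exists q ∈ K[x,y] with u, h ∈ K[q] and deg_y q ≤ 1. Then after the reduction d = 1, v_1 ∈ K^*, there exists a(x) ∈ K[x] with u, h ∈ K[y + a(x)]. -/
open MvPolynomial

namespace S18

/-- coefficients of a polynomial with vanishing derivative -/
lemma coeff_of_pderiv {K : Type*} [Field K] [CharZero K] (i : Fin 3)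
    (f : MvPolynomial (Fin 3) K) (hf : pderiv i f = 0) (s : Fin 3 →₀ ℕ)
    (hs : s ∈ f.support) : s i = 0 := by
  by_contra hne
  have h1 : coeff (s - Finsupp.single i 1) (pderiv i f) = 0 := by rw [hf]; simp
  rw [coeff_pderiv] at h1
  have h2 : s - Finsupp.single i 1 + Finsupp.single i 1 = s := by
    apply tsub_add_cancel_of_le
    simpa using Nat.one_le_iff_ne_zero.mpr hne
  rw [h2] at h1
  rw [mem_support_iff] at hs
  rcases mul_eq_zero.mp h1 with h | h
  · exact hs h
  · exact absurd h (by exact Nat.cast_add_one_ne_zero _)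

lemma exists_uni {K : Type*} [Field K] [CharZero K]
    (f : MvPolynomial (Fin 3) K) (h1 : pderiv 1 f = 0) (h2 : pderiv 2 f = 0) :
    ∃ B : Polynomial K, f = Polynomial.aeval (X (0 : Fin 3)) B := by
  have : f ∈ (Polynomial.aeval (R := K) (X (0 : Fin 3) : MvPolynomial (Fin 3) K)).range := by
    rw [f.as_sum]
    refine Subalgebra.sum_mem _ fun s hs => ?_
    refine ⟨Polynomial.C (coeff s f) * Polynomial.X ^ (s 0), ?_⟩
    have e1 := coeff_of_pderiv 1 f h1 s hs
    have e2 := coeff_of_pderiv 2 f h2 s hs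
    rw [monomial_eq]
    simp [Finsupp.prod_fintype, Fin.prod_univ_three, e1, e2, algebraMap_eq]
  obtain ⟨B, hB⟩ := this
  exact ⟨B, hB.symm⟩

lemma pderiv_uni {K : Type*} [Field K] (B : Polynomial K) :
    pderiv 0 (Polynomial.aeval (X (0 : Fin 3) : MvPolynomial (Fin 3) K) B)
      = Polynomial.aeval (X (0 : Fin 3)) (Polynomial.derivative B) := by
  rw [Derivation.map_aeval]; simp

lemma aeval_inj {K : Type*} [Field K] (B : Polynomial K)
    (h : Polynomial.aeval (X (0 : Fin 3) : MvPolynomial (Fin 3) K) B = 0) : B = 0 := by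
  have := congrArg (MvPolynomial.aeval (fun _ : Fin 3 => (Polynomial.X : Polynomial K))) h
  rw [← Polynomial.aeval_algHom_apply] at this
  simpa using this

lemma eq_zero_of_pderiv {K : Type*} [Field K] [CharZero K]
    (f : MvPolynomial (Fin 3) K) (h0 : pderiv 0 f = 0) (h1 : pderiv 1 f = 0)
    (h2 : pderiv 2 f = 0) (hc : constantCoeff f = 0) : f = 0 := by
  obtain ⟨B, rfl⟩ := exists_uni f h1 h2
  rw [pderiv_uni] at h0
  have := aeval_inj _ h0
  have hB := Polynomial.eq_C_of_natDegree_eq_zero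
    (Polynomial.derivative_eq_zero.mp this)
  rw [hB] at hc ⊢
  simp [algebraMap_eq] at hc ⊢
  exact hc

lemma pderiv_pderiv_deg {K : Type*} [Field K] [CharZero K]
    (q : MvPolynomial (Fin 3) K) (hq : degreeOf 1 q ≤ 1) : pderiv 1 (pderiv 1 q) = 0 := by
  ext s
  rw [coeff_pderiv, coeff_pderiv]
  have : coeff (s + Finsupp.single 1 1 + Finsupp.single 1 1) q = 0 := by
    by_contra hne
    have := degreeOf_le_iff.mp hq _ (mem_support_iff.mpr hne)
    simp at this
  simp [this]

lemma pd_comm {K : Type*} [Field K] (i j : Fin 3)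
    (q : MvPolynomial (Fin 3) K) : pderiv i (pderiv j q) = pderiv j (pderiv i q) := by
  have : ⁅pderiv (R := K) i, pderiv j⁆ = (0 : Derivation K (MvPolynomial (Fin 3) K) (MvPolynomial (Fin 3) K)) := by
    apply MvPolynomial.derivation_ext
    intro k
    rw [Derivation.commutator_apply]
    simp [pderiv_X, Pi.single_apply]
    split_ifs <;> simp
  have h := congrArg (fun d => d q) this
  simp only [Derivation.commutator_apply, Derivation.zero_apply] at h
  exact sub_eq_zero.mp h

lemma ode {K : Type*} [Field K] [CharZero K] (b : Polynomial K)
    (h : b ^ 2 * b.derivative.derivative.derivative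
      - 6 * b * b.derivative * b.derivative.derivative + 6 * b.derivative ^ 3 = 0) :
    b.natDegree = 0 := by
  by_contra hn
  set n := b.natDegree with hnd
  have key : ∀ f : Polynomial K, f.natDegree ≤ n →
      (Polynomial.X * f.derivative).natDegree ≤ n ∧
      (Polynomial.X * f.derivative).coeff n = n * f.coeff n := by
    intro f hf
    constructor
    · rw [Polynomial.natDegree_le_iff_coeff_eq_zero]
      intro k hk
      obtain ⟨m, rfl⟩ : ∃ m, k = m + 1 := ⟨k - 1, by omega⟩
      rw [Polynomial.coeff_X_mul, Polynomial.coeff_derivative,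
        Polynomial.coeff_eq_zero_of_natDegree_lt (by omega), zero_mul]
    · obtain ⟨m, hm⟩ : ∃ m, n = m + 1 := ⟨n - 1, by omega⟩
      rw [hm, Polynomial.coeff_X_mul, Polynomial.coeff_derivative]
      push_cast; ring
  have h1 := key b le_rfl
  set f1 := Polynomial.X * b.derivative with hf1
  have h2 := key f1 h1.1
  set f2 := Polynomial.X * f1.derivative with hf2
  have h3 := key f2 h2.1
  set f3 := Polynomial.X * f2.derivative with hf3
  have E : b ^ 2 * (f3 - 3 * f2 + 2 * f1) - 6 * b * f1 * (f2 - f1) + 6 * f1 ^ 3 = 0 := by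
    have : f3 - 3 * f2 + 2 * f1 = Polynomial.X ^ 3 * b.derivative.derivative.derivative := by
      rw [hf3, hf2, hf1]; simp [Polynomial.derivative_mul]; ring
    rw [this]
    have : f2 - f1 = Polynomial.X ^ 2 * b.derivative.derivative := by
      rw [hf2, hf1]; simp [Polynomial.derivative_mul]; ring
    rw [this, hf1]
    linear_combination Polynomial.X ^ 3 * h
  have c3 : ∀ f g k : Polynomial K, f.natDegree ≤ n → g.natDegree ≤ n → k.natDegree ≤ n →
      (f * g * k).coeff (n + n + n) = f.coeff n * g.coeff n * k.coeff n := by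
    intro f g k hf hg hk
    rw [Polynomial.coeff_mul_add_eq_of_natDegree_le
      (Polynomial.natDegree_mul_le_of_le hf hg) hk,
      Polynomial.coeff_mul_add_eq_of_natDegree_le hf hg]
  have E' : b * b * f3 - (3 : K) • (b * b * f2) + (2 : K) • (b * b * f1)
      - (6 : K) • (b * f1 * f2) + (6 : K) • (b * f1 * f1) + (6 : K) • (f1 * f1 * f1) = 0 := by
    simp only [Polynomial.smul_eq_C_mul, map_ofNat]
    linear_combination E
  have F := congrArg (fun p => Polynomial.coeff p (n + n + n)) E'
  have hb : b.natDegree ≤ n := le_rfl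
  simp only [Polynomial.coeff_add, Polynomial.coeff_sub, Polynomial.coeff_smul, smul_eq_mul,
    c3 _ _ _ hb hb h3.1, c3 _ _ _ hb hb h2.1, c3 _ _ _ hb hb h1.1, c3 _ _ _ hb h1.1 h2.1,
    c3 _ _ _ hb h1.1 h1.1, c3 _ _ _ h1.1 h1.1 h1.1, h3.2, h2.2, h1.2,
    Polynomial.coeff_zero] at F
  have G : (n : K) * (n + 1) * (n + 2) * b.coeff n ^ 3 = 0 := by linear_combination F
  have hlc : b.coeff n ≠ 0 := by
    rw [hnd, Polynomial.coeff_natDegree, Ne, Polynomial.leadingCoeff_eq_zero]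
    rintro rfl; simp at hnd; omega
  have q0 : (n : K) ≠ 0 := by exact_mod_cast hn
  have q1 : (n : K) + 1 ≠ 0 := by exact_mod_cast (by omega : n + 1 ≠ 0)
  have q2 : (n : K) + 2 ≠ 0 := by exact_mod_cast (by omega : n + 2 ≠ 0)
  exact absurd G (by simp [q0, q1, q2, hlc])

/-- The purely differential core. -/
lemma core {K : Type*} [Field K] [CharZero K] (v q : MvPolynomial (Fin 3) K) (c : K)
    (U G : Polynomial K)
    (hP : Polynomial.aeval q U.derivative ≠ 0)
    (hqq : pderiv 1 (pderiv 1 q) = 0)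
    (E1 : pderiv 1 v = - (Polynomial.aeval q U.derivative * pderiv 0 q))
    (E2 : Polynomial.aeval q U.derivative * pderiv 0 q * pderiv 1 v
      - Polynomial.aeval q U.derivative * pderiv 1 q * pderiv 0 v
      - C c * (Polynomial.aeval q G.derivative * pderiv 1 q) = 0) (hb : pderiv 1 q ≠ 0) :
    (pderiv 1 q) ^ 2 * pderiv 0 (pderiv 0 (pderiv 0 (pderiv 1 q)))
      - 6 * pderiv 1 q * pderiv 0 (pderiv 1 q) * pderiv 0 (pderiv 0 (pderiv 1 q))
      + 6 * pderiv 0 (pderiv 1 q) ^ 3 = 0 := by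
  have hPi : ∀ i : Fin 3, pderiv i (Polynomial.aeval q U.derivative) =
      Polynomial.aeval q U.derivative.derivative * pderiv i q := by
    intro i; rw [Derivation.map_aeval, smul_eq_mul]
  have hQi : ∀ i : Fin 3, pderiv i (Polynomial.aeval q G.derivative) =
      Polynomial.aeval q G.derivative.derivative * pderiv i q := by
    intro i; rw [Derivation.map_aeval, smul_eq_mul]
  have hP0 := hPi 0
  have hP1 := hPi 1
  have hQ0 := hQi 0
  have hQ1 := hQi 1
  clear hPi hQi
  generalize Polynomial.aeval q U.derivative = P at *
  generalize Polynomial.aeval q G.derivative = Q at *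
  generalize Polynomial.aeval q U.derivative.derivative = P2 at *
  generalize Polynomial.aeval q G.derivative.derivative = Q2 at *
  have hpy : pderiv 1 (pderiv 0 q) = pderiv 0 (pderiv 1 q) := pd_comm _ _ _
  generalize pderiv 0 q = p at *
  generalize pderiv 1 q = b at *
  have hb1 : pderiv 1 (pderiv 0 b) = 0 := by rw [pd_comm, hqq, map_zero]
  have hb2 : pderiv 1 (pderiv 0 (pderiv 0 b)) = 0 := by rw [pd_comm, hb1, map_zero]
  have hVy : pderiv 1 (pderiv 0 v) = - (P2 * p * p + P * pderiv 0 p) := by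
    rw [pd_comm, E1, map_neg, pderiv_mul, hP0]
  obtain ⟨T, hT⟩ : ∃ T, T = b * pderiv 0 v + p ^ 2 * P := ⟨_, rfl⟩
  have hPT : P * T = - (C c * (Q * b)) := by
    rw [hT]; rw [E1] at E2; linear_combination -E2
  have hTy : pderiv 1 T = P * (2 * p * pderiv 0 b - b * pderiv 0 p) := by
    rw [hT, map_add, pderiv_mul, pderiv_mul, pderiv_pow, hqq, hVy, hP1, hpy]
    push_cast; ring
  have hTx : b * pderiv 0 T - p * pderiv 1 T = pderiv 0 b * T := by
    have a0 := congrArg (pderiv 0) hPT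
    have a1 := congrArg (pderiv 1) hPT
    simp only [pderiv_mul, map_neg, hP0, hP1, hQ0, hQ1, pderiv_C, hqq] at a0 a1
    apply mul_left_cancel₀ hP
    linear_combination b * a0 - p * a1 - pderiv 0 b * hPT
  obtain ⟨S, hS⟩ : ∃ S, S = 2 * p * pderiv 0 b - b * pderiv 0 p := ⟨_, rfl⟩
  rw [← hS] at hTy
  have hTxy : pderiv 1 (pderiv 0 T) = P2 * p * S + P * pderiv 0 S := by
    rw [pd_comm, hTy, pderiv_mul, hP0]
  have hDS : b * pderiv 0 S - p * pderiv 1 S = 2 * pderiv 0 b * S := by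
    have a1 := congrArg (pderiv 1) hTx
    simp only [pderiv_mul, map_sub, hTxy, hTy, hP1, hqq, hpy, hb1] at a1
    apply mul_left_cancel₀ hP
    linear_combination a1
  have two : ∀ i : Fin 3, pderiv i (2 : MvPolynomial (Fin 3) K) = 0 := by
    intro i
    have : (2 : MvPolynomial (Fin 3) K) = C 2 := (map_ofNat C 2).symm
    rw [this, pderiv_C]
  have hpxy : pderiv 1 (pderiv 0 p) = pderiv 0 (pderiv 0 b) := by rw [pd_comm, hpy]
  have hSy : pderiv 1 S = 2 * pderiv 0 b ^ 2 - b * pderiv 0 (pderiv 0 b) := by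
    rw [hS]
    simp only [map_sub, pderiv_mul, two, hpy, hb1, hqq, hpxy]
    ring
  have hSyy : pderiv 1 (pderiv 1 S) = 0 := by
    rw [hSy]
    simp only [map_sub, pderiv_mul, pderiv_pow, two, hb1, hqq, hb2]
    ring
  have hSxy : pderiv 1 (pderiv 0 S) = 4 * pderiv 0 b * pderiv 0 (pderiv 0 b)
      - pderiv 0 b * pderiv 0 (pderiv 0 b) - b * pderiv 0 (pderiv 0 (pderiv 0 b)) := by
    rw [pd_comm, hSy]
    simp only [map_sub, pderiv_mul, pderiv_pow, two]
    push_cast; ring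
  have a1 := congrArg (pderiv 1) hDS
  simp only [pderiv_mul, map_sub, hSxy, hSyy, hqq, hpy, hb1, two] at a1
  rw [hSy] at a1
  linear_combination -a1

end S18

/-- Statement 18: For `H = (u(x,y), v₁z + v₀(x,y), h(x,y))` with `H(0) = 0`, `JH` nilpotent,
components linearly independent, `v₁ ∈ K*`, and `u, h ∈ K[q]` for some `q ∈ K[x,y]` with
`deg_y q ≤ 1`, there is `a(x) ∈ K[x]` such that `u, h ∈ K[y + a(x)]`. -/
theorem stmt_18 (K : Type*) [Field K] [IsAlgClosed K] [CharZero K]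
    (u v₀ h q : MvPolynomial (Fin 3) K) (v₁ : K) (hv₁ : v₁ ≠ 0)
    (hu2 : pderiv (2 : Fin 3) u = 0) (hv02 : pderiv (2 : Fin 3) v₀ = 0)
    (hh2 : pderiv (2 : Fin 3) h = 0) (hq2 : pderiv (2 : Fin 3) q = 0)
    (hu0 : MvPolynomial.constantCoeff u = 0)
    (hv0 : MvPolynomial.constantCoeff (MvPolynomial.C v₁ * MvPolynomial.X 2 + v₀) = 0)
    (hh0 : MvPolynomial.constantCoeff h = 0)
    (hnil : IsNilpotent (Matrix.of fun i j : Fin 3 =>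
      pderiv j (![u, MvPolynomial.C v₁ * MvPolynomial.X 2 + v₀, h] i)))
    (hindep : LinearIndependent K ![u, MvPolynomial.C v₁ * MvPolynomial.X 2 + v₀, h])
    (U G : Polynomial K)
    (hU : u = Polynomial.aeval q U) (hG : h = Polynomial.aeval q G)
    (hqdeg : MvPolynomial.degreeOf (1 : Fin 3) q ≤ 1) :
    ∃ a : Polynomial K, ∃ U' G' : Polynomial K,
      u = Polynomial.aeval
        (MvPolynomial.X (1 : Fin 3) + Polynomial.aeval (MvPolynomial.X (0 : Fin 3)) a) U' ∧
      h = Polynomial.aeval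
        (MvPolynomial.X (1 : Fin 3) + Polynomial.aeval (MvPolynomial.X (0 : Fin 3)) a) G' := by
  have htr := (Matrix.isNilpotent_trace_of_isNilpotent hnil).eq_zero
  have hnil2 := Commute.isNilpotent_mul_left (Commute.refl _) hnil
  have htr2 := (Matrix.isNilpotent_trace_of_isNilpotent hnil2).eq_zero
  obtain ⟨v, hv⟩ : ∃ v, v = C v₁ * X 2 + v₀ := ⟨_, rfl⟩
  have hv2 : pderiv 2 v = C v₁ := by rw [hv]; simp [hv02]
  rw [← hv] at htr htr2 hindep
  simp only [Matrix.trace, Matrix.diag_apply, Matrix.mul_apply, Fin.sum_univ_three,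
    Matrix.of_apply, Matrix.cons_val_zero, Matrix.cons_val_one, Matrix.cons_val, hh2, hu2, hv2]
    at htr htr2
  have hune : u ≠ 0 := hindep.ne_zero 0
  have hui : ∀ i : Fin 3, pderiv i u = Polynomial.aeval q U.derivative * pderiv i q := by
    intro i; rw [hU, Derivation.map_aeval, smul_eq_mul]
  have hhi : ∀ i : Fin 3, pderiv i h = Polynomial.aeval q G.derivative * pderiv i q := by
    intro i; rw [hG, Derivation.map_aeval, smul_eq_mul]
  have hP : Polynomial.aeval q U.derivative ≠ 0 := by
    intro h0
    exact hune (S18.eq_zero_of_pderiv u (by rw [hui, h0, zero_mul]) (by rw [hui, h0, zero_mul])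
      hu2 hu0)
  have hqq := S18.pderiv_pderiv_deg q hqdeg
  have E1 : pderiv 1 v = - (Polynomial.aeval q U.derivative * pderiv 0 q) := by
    rw [← hui]; linear_combination htr
  have E2 : Polynomial.aeval q U.derivative * pderiv 0 q * pderiv 1 v
      - Polynomial.aeval q U.derivative * pderiv 1 q * pderiv 0 v
      - C v₁ * (Polynomial.aeval q G.derivative * pderiv 1 q) = 0 := by
    rw [← hui, ← hui, ← hhi]
    rw [← hui] at E1
    apply mul_left_cancel₀ (two_ne_zero (α := MvPolynomial (Fin 3) K))
    rw [E1] at htr2 ⊢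
    linear_combination -htr2
  have hb : pderiv 1 q ≠ 0 := by
    intro h0
    have h1 : pderiv 0 u = 0 := by
      rw [h0, E1] at E2
      rw [hui]
      apply pow_eq_zero_iff (two_ne_zero) |>.mp
      linear_combination -E2
    exact hune (S18.eq_zero_of_pderiv u h1 (by rw [hui, h0, mul_zero]) hu2 hu0)
  have hode := S18.core v q v₁ U G hP hqq E1 E2 hb
  have hb2 : pderiv 2 (pderiv 1 q) = 0 := by rw [S18.pd_comm, hq2, map_zero]
  obtain ⟨B, hB⟩ := S18.exists_uni _ hqq hb2
  obtain ⟨A, hA⟩ := S18.exists_uni (q - pderiv 1 q * X 1)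
    (by simp [hqq]) (by simp [hq2, hb2])
  have hdeg : B.natDegree = 0 := by
    apply S18.ode
    apply S18.aeval_inj
    rw [hB] at hode
    simp only [S18.pderiv_uni] at hode
    have e6 : Polynomial.aeval (X (0 : Fin 3) : MvPolynomial (Fin 3) K) (6 : Polynomial K) = 6 :=
      map_ofNat _ 6
    simpa [e6] using hode
  rw [hB, Polynomial.eq_C_of_natDegree_eq_zero hdeg] at hA hb
  generalize B.coeff 0 = β at *
  have hβ : β ≠ 0 := by rintro rfl; simp at hb
  have hq : q = Polynomial.aeval (X (1 : Fin 3) +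
      Polynomial.aeval (X (0 : Fin 3)) (Polynomial.C β⁻¹ * A))
      (Polynomial.C β * Polynomial.X) := by
    have e : (C β * C β⁻¹ : MvPolynomial (Fin 3) K) = 1 := by
      rw [← C_mul, mul_inv_cancel₀ hβ, C_1]
    simp only [Polynomial.aeval_C, algebraMap_eq, map_mul, Polynomial.aeval_X] at hA ⊢
    rw [← hA]
    linear_combination (C β * X 1 - q) * e
  refine ⟨Polynomial.C β⁻¹ * A, U.comp (Polynomial.C β * Polynomial.X),
    G.comp (Polynomial.C β * Polynomial.X), ?_, ?_⟩
  · rw [Polynomial.aeval_comp, ← hq, hU]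
  · rw [Polynomial.aeval_comp, ← hq, hG]
end
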